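/- Let 0 < r ≤ 1, let Λ be a nonempty index set, q ∈ ℕ, and let {X_𝐧(λ) : 𝐧 ∈ ℕ^q, λ ∈ Λ} and {Y_𝐧(λ) : 𝐧 ∈ ℕ^q, λ ∈ Λ} be real-valued random fields of stochastic processes on a common probability space satisfying the strict marginal stationarity condition (X_𝐧(λ), Y_𝐧(λ)) equals (X_𝐧(λ'), Y_𝐧(λ')) in distribution for all λ, λ' ∈ Λ and all 𝐧. Suppose that for each λ ∈ Λ the families {|X_𝐧(λ)|^r : 𝐧} and {|Y_𝐧(λ)|^r : 𝐧} are uniformly integrable, that for each 𝐧 the map ω ↦ sup_{λ∈Λ} |X_𝐧(λ)(ω) − Y_𝐧(λ)(ω)| is a (finite-valued) random variable, and that sup_{λ∈Λ} |X_𝐧(λ) − Y_𝐧(λ)| → 0 in probability as 𝐧 → ∞. Then sup_{λ∈Λ} E|X_𝐧(λ) − Y_𝐧(λ)|^r → 0 as 𝐧 → ∞. -/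

import Mathlib

open MeasureTheory ProbabilityTheory Filter

/-!
By stationarity `E|X_𝐧(λ) − Y_𝐧(λ)|^r` does not depend on `λ`, so the supremum is the moment at a
single index `λ₀`. There `|x − y|^r ≤ 2^r (|x|^r + |y|^r)` makes `|X_𝐧(λ₀) − Y_𝐧(λ₀)|^r` uniformly
integrable, and it tends to `0` in probability, hence in `L¹` by Vitali's theorem.
-/

open scoped Topology ENNReal

lemma norm_sub_rpow_le {E : Type*} [SeminormedAddGroup E] (x y : E) {r : ℝ} (hr : 0 ≤ r) :
    ‖x - y‖ ^ r ≤ 2 ^ r * (‖x‖ ^ r + ‖y‖ ^ r) := by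
  have hmax : max ‖x‖ ‖y‖ ^ r ≤ ‖x‖ ^ r + ‖y‖ ^ r := by
    rcases max_choice ‖x‖ ‖y‖ with h | h <;> rw [h]
    · exact le_add_of_nonneg_right (by positivity)
    · exact le_add_of_nonneg_left (by positivity)
  calc ‖x - y‖ ^ r
      ≤ (2 * max ‖x‖ ‖y‖) ^ r := by
        gcongr
        linarith [norm_sub_le x y, le_max_left ‖x‖ ‖y‖, le_max_right ‖x‖ ‖y‖]
    _ = 2 ^ r * max ‖x‖ ‖y‖ ^ r := Real.mul_rpow zero_le_two (by positivity)
    _ ≤ 2 ^ r * (‖x‖ ^ r + ‖y‖ ^ r) := by gcongr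

section Vitali

variable {ι Ω E F : Type*} [MeasurableSpace Ω] {μ : Measure Ω}

lemma unifIntegrable_of_norm_le_mul [NormedAddCommGroup E] [NormedAddCommGroup F] {p : ℝ≥0∞}
    {f : ι → Ω → E} {g : ι → Ω → F} (C : ℝ) (hf : UnifIntegrable f p μ)
    (hgf : ∀ i, ∀ᵐ ω ∂μ, ‖g i ω‖ ≤ C * ‖f i ω‖) : UnifIntegrable g p μ := by
  intro ε hε
  obtain ⟨δ, hδ, hfδ⟩ := hf (ε := ε / (|C| + 1)) (by positivity)
  refine ⟨δ, hδ, fun i s hs hsδ => ?_⟩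
  have hind : ∀ᵐ ω ∂μ, ‖s.indicator (g i) ω‖ ≤ (|C| + 1) * ‖s.indicator (f i) ω‖ := by
    filter_upwards [hgf i] with ω hω
    by_cases hωs : ω ∈ s
    · simp only [Set.indicator_of_mem hωs]
      exact hω.trans (by gcongr; linarith [le_abs_self C])
    · simp [Set.indicator_of_notMem hωs]
  calc eLpNorm (s.indicator (g i)) p μ
      ≤ ENNReal.ofReal (|C| + 1) * eLpNorm (s.indicator (f i)) p μ :=
        eLpNorm_le_mul_eLpNorm_of_ae_le_mul hind p
    _ ≤ ENNReal.ofReal (|C| + 1) * ENNReal.ofReal (ε / (|C| + 1)) := by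
        gcongr
        exact hfδ i s hs hsδ
    _ = ENNReal.ofReal ε := by
        rw [← ENNReal.ofReal_mul (by positivity), mul_div_cancel₀ ε (by positivity)]

lemma unifIntegrable_norm_sub_rpow [NormedAddCommGroup E] {X Y : ι → Ω → E} {r : ℝ} (hr : 0 ≤ r)
    (hXm : ∀ i, AEStronglyMeasurable (X i) μ) (hYm : ∀ i, AEStronglyMeasurable (Y i) μ)
    (hX : UnifIntegrable (fun i ω => ‖X i ω‖ ^ r) 1 μ)
    (hY : UnifIntegrable (fun i ω => ‖Y i ω‖ ^ r) 1 μ) :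
    UnifIntegrable (fun i ω => ‖X i ω - Y i ω‖ ^ r) 1 μ := by
  have hmeas {Z : ι → Ω → E} (hZ : ∀ i, AEStronglyMeasurable (Z i) μ) (i : ι) :
      AEStronglyMeasurable (fun ω => ‖Z i ω‖ ^ r) μ :=
    ((hZ i).norm.aemeasurable.pow_const r).aestronglyMeasurable
  refine unifIntegrable_of_norm_le_mul (2 ^ r) (hX.add hY le_rfl (hmeas hXm) (hmeas hYm))
    fun i => ae_of_all μ fun ω => ?_
  rw [Real.norm_of_nonneg (by positivity), Pi.add_apply, Pi.add_apply,
    Real.norm_of_nonneg (by positivity)]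
  exact norm_sub_rpow_le _ _ hr

lemma tendstoInMeasure_zero_of_norm_le [SeminormedAddCommGroup E] [SeminormedAddCommGroup F]
    {u : Filter ι} {f : ι → Ω → E} {g : ι → Ω → F} (hg : TendstoInMeasure μ g u 0)
    (hfg : ∀ i ω, ‖f i ω‖ ≤ ‖g i ω‖) : TendstoInMeasure μ f u 0 := by
  simp only [tendstoInMeasure_iff_norm, Pi.zero_apply, sub_zero] at hg ⊢
  exact fun ε hε => tendsto_of_tendsto_of_tendsto_of_le_of_le tendsto_const_nhds (hg ε hε)
    (fun _ => zero_le) fun i => measure_mono fun ω hω => le_trans hω (hfg i ω)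

lemma tendstoInMeasure_norm_rpow_zero [SeminormedAddCommGroup E] {u : Filter ι} {f : ι → Ω → E}
    {r : ℝ} (hr : 0 < r) (hf : TendstoInMeasure μ f u 0) :
    TendstoInMeasure μ (fun i ω => ‖f i ω‖ ^ r) u 0 := by
  simp only [tendstoInMeasure_iff_norm, Pi.zero_apply, sub_zero] at hf ⊢
  intro ε hε
  have hlevel (i : ι) (ω : Ω) : ε ≤ ‖‖f i ω‖ ^ r‖ ↔ ε ^ r⁻¹ ≤ ‖f i ω‖ := by
    rw [Real.norm_of_nonneg (by positivity), Real.rpow_inv_le_iff_of_pos hε.le (norm_nonneg _) hr]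
  simpa only [hlevel] using hf (ε ^ r⁻¹) (by positivity)

lemma eLpNorm_le_add_of_norm_le_on_compl [NormedAddCommGroup E] {p : ℝ≥0∞} (hp : 1 ≤ p)
    {f : Ω → E} (hf : AEStronglyMeasurable f μ) {s : Set Ω} (hs : MeasurableSet s) {C : ℝ}
    (hC : 0 ≤ C) (hfC : ∀ ω ∉ s, ‖f ω‖ ≤ C) :
    eLpNorm f p μ
      ≤ eLpNorm (s.indicator f) p μ + μ Set.univ ^ p.toReal⁻¹ * ENNReal.ofReal C := by
  have hcompl (ω : Ω) : ‖sᶜ.indicator f ω‖ ≤ C := by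
    by_cases hω : ω ∈ s
    · simpa [hω] using hC
    · simpa [hω] using hfC ω hω
  calc eLpNorm f p μ
      = eLpNorm (s.indicator f + sᶜ.indicator f) p μ := by rw [Set.indicator_self_add_compl]
    _ ≤ eLpNorm (s.indicator f) p μ + eLpNorm (sᶜ.indicator f) p μ :=
        eLpNorm_add_le (hf.indicator hs) (hf.indicator hs.compl) hp
    _ ≤ _ := by
        gcongr
        exact eLpNorm_le_of_ae_bound (ae_of_all μ hcompl)

-- `tendsto_Lp_finite_of_tendstoInMeasure` covers sequences only. Splitting at the level set
-- `{η ≤ ‖f i‖}` avoids a.e. convergent subsequences and so works along every filter.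
lemma tendsto_eLpNorm_zero_of_tendstoInMeasure [NormedAddCommGroup E] [IsFiniteMeasure μ]
    {u : Filter ι} {p : ℝ≥0∞} (hp : 1 ≤ p) {f : ι → Ω → E}
    (hfm : ∀ i, AEStronglyMeasurable (f i) μ) (hfui : UnifIntegrable f p μ)
    (hf : TendstoInMeasure μ f u 0) : Tendsto (fun i => eLpNorm (f i) p μ) u (𝓝 0) := by
  refine ENNReal.tendsto_nhds_zero.2 fun ε hε => ?_
  have hfin : 1 + μ Set.univ ^ p.toReal⁻¹ ≠ ∞ := by finiteness
  obtain ⟨η, hη, hηε⟩ := ENNReal.exists_nnreal_pos_mul_lt hfin hε.ne'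
  obtain ⟨δ, hδ, hsmall⟩ := hfui (NNReal.coe_pos.2 hη)
  simp only [tendstoInMeasure_iff_norm, Pi.zero_apply, sub_zero] at hf
  filter_upwards [(hf η hη).eventually_le_const (ENNReal.ofReal_pos.2 hδ)] with i hi
  let s := toMeasurable μ {ω | (η : ℝ) ≤ ‖f i ω‖}
  have hs : MeasurableSet s := measurableSet_toMeasurable _ _
  have hbound (ω : Ω) (hω : ω ∉ s) : ‖f i ω‖ ≤ η :=
    (not_le.1 fun h => hω (subset_toMeasurable _ _ h)).le
  calc eLpNorm (f i) p μ
      ≤ eLpNorm (s.indicator (f i)) p μ + μ Set.univ ^ p.toReal⁻¹ * ENNReal.ofReal η :=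
        eLpNorm_le_add_of_norm_le_on_compl hp (hfm i) hs η.coe_nonneg hbound
    _ ≤ ENNReal.ofReal η + μ Set.univ ^ p.toReal⁻¹ * ENNReal.ofReal η := by
        gcongr
        exact hsmall i s hs ((measure_toMeasurable _).trans_le hi)
    _ = η * (1 + μ Set.univ ^ p.toReal⁻¹) := by rw [ENNReal.ofReal_coe_nnreal]; ring
    _ ≤ ε := hηε.le

lemma tendsto_integral_zero_of_tendsto_eLpNorm_one [NormedAddCommGroup E] [NormedSpace ℝ E]
    {u : Filter ι} {f : ι → Ω → E} (hf : Tendsto (fun i => eLpNorm (f i) 1 μ) u (𝓝 0)) :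
    Tendsto (fun i => ∫ ω, f i ω ∂μ) u (𝓝 0) := by
  simp only [eLpNorm_one_eq_lintegral_enorm] at hf
  rw [tendsto_zero_iff_enorm_tendsto_zero]
  exact tendsto_of_tendsto_of_tendsto_of_le_of_le tendsto_const_nhds hf (fun _ => zero_le)
    fun i => enorm_integral_le_lintegral_enorm (f i)

lemma tendsto_integral_norm_sub_rpow_zero [NormedAddCommGroup E] [IsFiniteMeasure μ]
    {u : Filter ι} {X Y : ι → Ω → E} {r : ℝ} (hr : 0 < r)
    (hXm : ∀ i, AEStronglyMeasurable (X i) μ) (hYm : ∀ i, AEStronglyMeasurable (Y i) μ)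
    (hX : UnifIntegrable (fun i ω => ‖X i ω‖ ^ r) 1 μ)
    (hY : UnifIntegrable (fun i ω => ‖Y i ω‖ ^ r) 1 μ)
    (hXY : TendstoInMeasure μ (fun i ω => X i ω - Y i ω) u 0) :
    Tendsto (fun i => ∫ ω, ‖X i ω - Y i ω‖ ^ r ∂μ) u (𝓝 0) := by
  have hmeas (i : ι) : AEStronglyMeasurable (fun ω => ‖X i ω - Y i ω‖ ^ r) μ :=
    (((hXm i).sub (hYm i)).norm.aemeasurable.pow_const r).aestronglyMeasurable
  exact tendsto_integral_zero_of_tendsto_eLpNorm_one <|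
    tendsto_eLpNorm_zero_of_tendstoInMeasure le_rfl hmeas
      (unifIntegrable_norm_sub_rpow hr.le hXm hYm hX hY) (tendstoInMeasure_norm_rpow_zero hr hXY)

end Vitali

lemma iSup_integral_comp_eq_of_identDistrib {Ω Λ S : Type*} [MeasurableSpace Ω]
    [MeasurableSpace S] {μ : Measure Ω} {Z : Λ → Ω → S} {l₀ : Λ}
    (hZ : ∀ l, IdentDistrib (Z l) (Z l₀) μ μ) {g : S → ℝ} (hg : Measurable g) :
    (⨆ l, ∫ ω, g (Z l ω) ∂μ) = ∫ ω, g (Z l₀ ω) ∂μ := by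
  have : Nonempty Λ := ⟨l₀⟩
  have hconst (l : Λ) : ∫ ω, g (Z l ω) ∂μ = ∫ ω, g (Z l₀ ω) ∂μ := ((hZ l).comp hg).integral_eq
  simp only [hconst, ciSup_const]

lemma tendstoInMeasure_zero_of_iSup_norm {ι Ω Λ E : Type*} [MeasurableSpace Ω]
    [SeminormedAddCommGroup E] {μ : Measure Ω} {u : Filter ι} {Z : ι → Λ → Ω → E}
    (hbdd : ∀ i ω, BddAbove (Set.range fun l => ‖Z i l ω‖))
    (hZ : TendstoInMeasure μ (fun i ω => ⨆ l, ‖Z i l ω‖) u 0) (l : Λ) :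
    TendstoInMeasure μ (fun i => Z i l) u 0 :=
  tendstoInMeasure_zero_of_norm_le hZ fun i ω => (le_ciSup (hbdd i ω) l).trans (le_abs_self _)

theorem field_moment_convergence_diff_general {ι Ω Λ E : Type*} [MeasurableSpace Ω]
    [NormedAddCommGroup E] [SecondCountableTopology E] [MeasurableSpace E] [BorelSpace E]
    {P : Measure Ω} [IsFiniteMeasure P] {u : Filter ι} {r : ℝ} (hr : 0 < r)
    {X Y : ι → Λ → Ω → E} (l₀ : Λ)
    (hstat : ∀ i l,
      IdentDistrib (fun ω => (X i l ω, Y i l ω)) (fun ω => (X i l₀ ω, Y i l₀ ω)) P P)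
    (hX : UnifIntegrable (fun i ω => ‖X i l₀ ω‖ ^ r) 1 P)
    (hY : UnifIntegrable (fun i ω => ‖Y i l₀ ω‖ ^ r) 1 P)
    (hXY : TendstoInMeasure P (fun i ω => X i l₀ ω - Y i l₀ ω) u 0) :
    Tendsto (fun i => ⨆ l, ∫ ω, ‖X i l ω - Y i l ω‖ ^ r ∂P) u (𝓝 0) := by
  have hpair (i : ι) : AEMeasurable (fun ω => (X i l₀ ω, Y i l₀ ω)) P :=
    (hstat i l₀).aemeasurable_snd
  have hg : Measurable fun z : E × E => ‖z.1 - z.2‖ ^ r := by fun_prop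
  have hsup (i : ι) :
      (⨆ l, ∫ ω, ‖X i l ω - Y i l ω‖ ^ r ∂P) = ∫ ω, ‖X i l₀ ω - Y i l₀ ω‖ ^ r ∂P :=
    iSup_integral_comp_eq_of_identDistrib (hstat i) hg
  simp only [hsup]
  exact tendsto_integral_norm_sub_rpow_zero hr (fun i => (hpair i).fst.aestronglyMeasurable)
    (fun i => (hpair i).snd.aestronglyMeasurable) hX hY hXY

/-- For random fields of stochastic processes `X_𝐧(λ)`, `Y_𝐧(λ)` satisfying
strict marginal stationarity, with `{|X_𝐧(λ)|^r}` and `{|Y_𝐧(λ)|^r}` uniformly integrable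
for each `λ`, a measurable finite-valued sup, and
`sup_λ |X_𝐧(λ) − Y_𝐧(λ)| → 0` in probability, we have
`sup_λ E|X_𝐧(λ) − Y_𝐧(λ)|^r → 0` as `𝐧 → ∞`, for `0 < r ≤ 1`. -/
theorem field_moment_convergence_diff
    {Ω : Type*} [MeasurableSpace Ω] (P : Measure Ω) [IsProbabilityMeasure P]
    {Λ : Type*} [Nonempty Λ] (q : ℕ)
    (r : ℝ) (hr0 : 0 < r) (hr1 : r ≤ 1)
    (X Y : (Fin q → ℕ) → Λ → Ω → ℝ)
    (hXm : ∀ n l, Measurable (X n l)) (hYm : ∀ n l, Measurable (Y n l))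
    (hstat : ∀ (n : Fin q → ℕ) (l l' : Λ),
      IdentDistrib (fun ω => (X n l ω, Y n l ω)) (fun ω => (X n l' ω, Y n l' ω)) P P)
    (hXui : ∀ l, UniformIntegrable (fun n ω => |X n l ω| ^ r) 1 P)
    (hYui : ∀ l, UniformIntegrable (fun n ω => |Y n l ω| ^ r) 1 P)
    (hbdd : ∀ (n : Fin q → ℕ) (ω : Ω), BddAbove (Set.range fun l => |X n l ω - Y n l ω|))
    (hsm : ∀ n : Fin q → ℕ, Measurable fun ω => ⨆ l, |X n l ω - Y n l ω|)
    (hconv : TendstoInMeasure P (fun n ω => ⨆ l, |X n l ω - Y n l ω|) atTop 0) :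
    Tendsto (fun n : Fin q → ℕ => ⨆ l, ∫ ω, |X n l ω - Y n l ω| ^ r ∂P)
      atTop (nhds 0) := by
  obtain ⟨l₀⟩ := ‹Nonempty Λ›
  simp only [← Real.norm_eq_abs] at hXui hYui hbdd hconv ⊢
  exact field_moment_convergence_diff_general hr0 l₀ (hstat · · l₀) (hXui l₀).unifIntegrable
    (hYui l₀).unifIntegrable (tendstoInMeasure_zero_of_iSup_norm hbdd hconv l₀)
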